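/- Fix a > 0, and for b > 0 let A(b) = ∫₀^a (2b/π)·arcsin((cos(πx/(2a)))^((a/b)²)) dx be the area of the quarter Neumann domain Λ_{a,b}. Let γ₀ = (4√2/π²)·∫₀^∞ arcsin(exp(−x²)) dx. Then A(b) − γ₀·b² = O(b³) as b → 0 from the right; equivalently A(b) = γ₀·b²·(1 + O(b)). -/

import Mathlib

/-!
Put `t = π x / (2 a)` and `M = (a / b)²`. The integrand of `quarterArea` is, up to the factor
`2 b / π`, `arcsin (cos t ^ M)`, while the substitution `x ↦ k x` with `k = π / (2 √2 b)` writes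
`gammaConst * b ^ 2` as `2 b / π` times the integral over `(0, ∞)` of `arcsin (exp (-M t² / 2))`.
It therefore suffices that the two integrals differ by `O(b²) = O(1 / M)`.

On `[0, a]` the integrands themselves differ by at most `4 / M`, uniformly
(`abs_arcsin_cos_rpow_sub_le`). The point is that `-log (cos t) = t² / 2 + O(t⁴)`, so for
`p = M t² / 2` the exponent is off by `O(M t⁴) = O(p² / M)`, and the derivative of
`p ↦ arcsin (e^{-p})` is `O(1 / p²)` (`arcsin_exp_neg_sub_le`); this covers both the decay at
infinity and the square-root singularity of `arcsin` at `1`. Beyond `a` the Gaussian tail is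
`O(1 / k²) = O(b²)` (`integral_Ioi_arcsin_exp_le`).
-/

open Real Asymptotics Filter

/-- The area of the quarter Neumann domain Λ_{a,b}. -/
noncomputable def quarterArea (a b : ℝ) : ℝ :=
  ∫ x in (0 : ℝ)..a, (2 * b / π) * arcsin (cos (π * x / (2 * a)) ^ ((a / b) ^ 2))

/-- The constant γ₀ = (4√2/π²)·∫₀^∞ arcsin(e^{-x²}) dx. -/
noncomputable def gammaConst : ℝ :=
  (4 * Real.sqrt 2 / π ^ 2) * ∫ x in Set.Ioi (0 : ℝ), arcsin (exp (-x ^ 2))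

lemma arcsin_le_pi_div_two_mul {y : ℝ} (h0 : 0 ≤ y) (h1 : y ≤ 1) :
    arcsin y ≤ π / 2 * y := by
  have h := Real.mul_le_sin (arcsin_nonneg.2 h0) (arcsin_le_pi_div_two y)
  rw [sin_arcsin (by linarith) h1] at h
  have hpi := pi_pos
  calc arcsin y = π / 2 * (2 / π * arcsin y) := by field_simp
    _ ≤ π / 2 * y := by gcongr

/-- The crude consequence `e^{-p} ≤ 1/p` of the exponential decay is all that the tail
estimates need. -/
lemma arcsin_exp_neg_le {p : ℝ} (hp : 0 < p) : arcsin (exp (-p)) ≤ π / 2 / p := by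
  have h := arcsin_le_pi_div_two_mul (exp_pos (-p)).le (exp_le_one_iff.2 (by linarith))
  have h2 : exp (-p) ≤ 1 / p := by
    rw [exp_neg, ← one_div]
    exact one_div_le_one_div_of_le hp (by linarith [add_one_le_exp p])
  calc _ ≤ _ := h
    _ ≤ π / 2 * (1 / p) := by gcongr
    _ = _ := by ring

/-- Mean value estimate: the derivative of `p ↦ arcsin (e^{-p})` is `-1 / √(e^{2p} - 1)`, whose
absolute value is at most `2 / p²` because `e^{2p} - 1 ≥ p⁴ / 4`. -/
lemma arcsin_exp_neg_sub_le {p q : ℝ} (hp : 0 < p) (hpq : p ≤ q) :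
    arcsin (exp (-p)) - arcsin (exp (-q)) ≤ 2 / p ^ 2 * (q - p) := by
  rcases hpq.eq_or_lt with rfl | hlt
  · simp
  have hd : ∀ c, 0 < c → HasDerivAt (fun c => arcsin (exp (-c)))
      (1 / √(1 - exp (-c) ^ 2) * (exp (-c) * (-1))) c := by
    intro c hc
    have h1 : exp (-c) < 1 := exp_lt_one_iff.2 (by linarith)
    have h0 := exp_pos (-c)
    exact (hasDerivAt_arcsin (by linarith) h1.ne).comp c ((hasDerivAt_neg c).exp)
  obtain ⟨c, ⟨hc1, hc2⟩, hc⟩ := exists_hasDerivAt_eq_slope (fun c => arcsin (exp (-c)))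
    _ hlt (by fun_prop) (fun x hx => hd x (hp.trans hx.1))
  have hc0 : 0 < c := hp.trans hc1
  have hqp : 0 < q - p := by linarith
  have key : exp (-c) * c ^ 2 ≤ 2 * √(1 - exp (-c) ^ 2) := by
    have hE : 1 + c ^ 4 / 4 ≤ exp (2 * c) := by
      have := Real.sum_le_exp_of_nonneg (x := 2 * c) (by positivity) 5
      simp [Finset.sum_range_succ, Nat.factorial] at this
      nlinarith [pow_pos hc0 2, pow_pos hc0 3, pow_pos hc0 4]
    have hee : exp (-c) ^ 2 * exp (2 * c) = 1 := by
      rw [← exp_nat_mul, ← exp_add]; simp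
    have h4 : (exp (-c) * c ^ 2 / 2) ≤ √(1 - exp (-c) ^ 2) := by
      apply Real.le_sqrt_of_sq_le
      have := mul_le_mul_of_nonneg_left hE (sq_nonneg (exp (-c)))
      rw [hee] at this
      linarith
    linarith
  have hs : 0 < √(1 - exp (-c) ^ 2) := by
    apply Real.sqrt_pos.2
    have h1 : exp (-c) < 1 := exp_lt_one_iff.2 (by linarith)
    nlinarith [exp_pos (-c)]
  have hb : 1 / √(1 - exp (-c) ^ 2) * exp (-c) ≤ 2 / p ^ 2 := by
    calc _ = exp (-c) / √(1 - exp (-c) ^ 2) := by ring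
      _ ≤ 2 / c ^ 2 := by
        rw [div_le_div_iff₀ hs (by positivity)]; exact key
      _ ≤ 2 / p ^ 2 := by gcongr
  rw [eq_div_iff hqp.ne'] at hc
  calc _ = (1 / √(1 - exp (-c) ^ 2) * exp (-c)) * (q - p) := by linarith
    _ ≤ _ := by gcongr

lemma cos_le_exp_neg_sq_div_two {t : ℝ} (h0 : 0 ≤ t) (h1 : t ≤ π / 2) :
    cos t ≤ exp (-(t ^ 2 / 2)) := by
  have hd : ∀ x, HasDerivAt (fun x => exp (x ^ 2 / 2) * cos x)
      (exp (x ^ 2 / 2) * x * cos x + exp (x ^ 2 / 2) * (-sin x)) x := by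
    intro x
    have h : HasDerivAt (fun x : ℝ => x ^ 2 / 2) x x := by
      simpa using (hasDerivAt_pow 2 x).div_const 2
    exact h.exp.mul (hasDerivAt_cos x)
  have hanti : AntitoneOn (fun x => exp (x ^ 2 / 2) * cos x) (Set.Icc 0 (π / 2)) := by
    apply antitoneOn_of_deriv_nonpos (convex_Icc _ _) (by fun_prop)
      (fun x _ => (hd x).differentiableAt.differentiableWithinAt)
    intro x hx
    rw [interior_Icc] at hx
    rw [(hd x).deriv]
    have hc : 0 < cos x := cos_pos_of_mem_Ioo ⟨by linarith [hx.1, pi_pos], hx.2⟩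
    have ht := lt_tan hx.1 hx.2
    rw [tan_eq_sin_div_cos, lt_div_iff₀ hc] at ht
    nlinarith [exp_pos (x ^ 2 / 2)]
  have h := hanti ⟨le_rfl, by positivity⟩ ⟨h0, h1⟩ h0
  simp only [ne_eq, OfNat.ofNat_ne_zero, not_false_eq_true, zero_pow, zero_div, exp_zero, cos_zero,
    mul_one] at h
  rw [exp_neg, ← one_div, le_div_iff₀ (exp_pos _), mul_comm]
  exact h

/-- The uniform comparison of the power of the cosine with the Gaussian. With `p = M t² / 2` and
`q = -M log (cos t)` the difference is that of `arcsin (e^{-·})` at `p` and `q`. For `t ≤ 1` one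
has `q - p ≤ M t⁴ / 2 = 2 p² / M`, and the factor `p²` is absorbed by the decay of the derivative;
for `t ≥ 1` both terms are `O(1 / M)` separately. -/
lemma abs_arcsin_cos_rpow_sub_le {t M : ℝ} (hM : 0 < M) (h0 : 0 ≤ t) (h1 : t ≤ π / 2) :
    |arcsin (cos t ^ M) - arcsin (exp (-(M * t ^ 2 / 2)))| ≤ 4 / M := by
  rcases h0.eq_or_lt with rfl | h0
  · simp; positivity
  have hcos0 : 0 ≤ cos t := cos_nonneg_of_mem_Icc ⟨by linarith, h1⟩
  have hp : 0 < M * t ^ 2 / 2 := by positivity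
  have hle : cos t ^ M ≤ exp (-(M * t ^ 2 / 2)) := by
    have := Real.rpow_le_rpow hcos0 (cos_le_exp_neg_sq_div_two h0.le h1) hM.le
    rwa [← exp_mul, show -(t ^ 2 / 2) * M = -(M * t ^ 2 / 2) by ring] at this
  have hmono := monotone_arcsin hle
  rw [abs_of_nonpos (by linarith), neg_sub]
  rcases le_total t 1 with ht | ht
  · have hy : t ^ 2 / 2 ≤ 1 / 2 := by nlinarith
    have hclow : 1 - t ^ 2 / 2 ≤ cos t := one_sub_sq_div_two_le_cos
    have hcpos : 0 < cos t := by linarith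
    have hlog : -log (cos t) ≤ t ^ 2 / 2 + t ^ 4 / 2 := by
      have h := log_le_sub_one_of_pos (inv_pos.2 hcpos)
      rw [log_inv] at h
      have : (cos t)⁻¹ ≤ 1 + t ^ 2 / 2 + t ^ 4 / 2 := by
        rw [inv_le_iff_one_le_mul₀ hcpos]
        calc 1 ≤ (1 + t ^ 2 / 2 + t ^ 4 / 2) * (1 - t ^ 2 / 2) := by
              nlinarith [mul_nonneg (pow_nonneg h0.le 4) (sub_nonneg.2 hy)]
          _ ≤ _ := by gcongr
      linarith
    have hrw : cos t ^ M = exp (-(M * -log (cos t))) := by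
      rw [rpow_def_of_pos hcpos]; congr 1; ring
    rw [hrw] at hle ⊢
    have hpq : M * t ^ 2 / 2 ≤ M * -log (cos t) := by
      have := exp_le_exp.1 hle; linarith
    calc _ ≤ _ := arcsin_exp_neg_sub_le hp hpq
      _ ≤ 2 / (M * t ^ 2 / 2) ^ 2 * (M * (t ^ 2 / 2 + t ^ 4 / 2) - M * t ^ 2 / 2) := by gcongr
      _ = 4 / M := by field_simp; ring
  · have hn : 0 ≤ arcsin (cos t ^ M) := arcsin_nonneg.2 (rpow_nonneg hcos0 M)
    have hb := arcsin_exp_neg_le hp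
    have : π / 2 / (M * t ^ 2 / 2) ≤ 4 / M := by
      rw [div_le_div_iff₀ hp hM]
      nlinarith [pi_le_four, mul_le_mul_of_nonneg_left (one_le_pow₀ ht : 1 ≤ t ^ 2) hM.le, pi_pos]
    linarith

lemma integrableOn_arcsin_exp_neg_sq :
    MeasureTheory.IntegrableOn (fun x : ℝ => arcsin (exp (-x ^ 2))) (Set.Ioi 0) := by
  have h : MeasureTheory.Integrable (fun x : ℝ => π / 2 * exp (-1 * x ^ 2)) :=
    (integrable_exp_neg_mul_sq one_pos).const_mul _
  refine (h.mono' (by fun_prop) (.of_forall fun x => ?_)).integrableOn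
  rw [Real.norm_of_nonneg (arcsin_nonneg.2 (exp_pos _).le), neg_one_mul]
  exact arcsin_le_pi_div_two_mul (exp_pos _).le (exp_le_one_iff.2 (by nlinarith [sq_nonneg x]))

/-- The part of the Gaussian integral that lies beyond the interval `[0, a]`. -/
lemma integral_Ioi_arcsin_exp_le {a k : ℝ} (ha : 0 < a) (hk : 0 < k) :
    ∫ x in Set.Ioi a, arcsin (exp (-(k * x) ^ 2)) ≤ π / 2 / k ^ 2 * (1 / a) := by
  have hi : MeasureTheory.IntegrableOn (fun x : ℝ => x ^ (-2 : ℝ)) (Set.Ioi a) :=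
    integrableOn_Ioi_rpow_of_lt (by norm_num) ha
  have hv : ∫ x in Set.Ioi a, x ^ (-2 : ℝ) = 1 / a := by
    rw [integral_Ioi_rpow_of_lt (by norm_num) ha]
    norm_num [rpow_neg_one]
  rw [← hv, ← MeasureTheory.integral_const_mul]
  refine MeasureTheory.integral_mono_of_nonneg
    (.of_forall fun x => arcsin_nonneg.2 (exp_pos _).le) (hi.const_mul _) ?_
  filter_upwards [MeasureTheory.ae_restrict_mem measurableSet_Ioi] with x hx
  have hx0 : 0 < x := ha.trans hx
  refine (arcsin_exp_neg_le (by positivity)).trans_eq ?_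
  rw [rpow_neg hx0.le, rpow_two]
  field_simp

/-- The explicit error bound, valid for every `b > 0`. -/
lemma abs_quarterArea_sub_le {a b : ℝ} (ha : 0 < a) (hb : 0 < b) :
    |quarterArea a b - gammaConst * b ^ 2| ≤ 2 / π * (4 / a + 4 / π / a) * b ^ 3 := by
  have hpi := pi_pos
  -- With `k = π / (2√2 b)`, `(k x)² = (a / b)² t² / 2` for `t = π x / (2 a)`.
  set k : ℝ := π / (2 * √2 * b) with hk
  have hkpos : 0 < k := by positivity
  have h2 : √2 ^ 2 = 2 := sq_sqrt (by norm_num)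
  set f : ℝ → ℝ := fun x => arcsin (cos (π * x / (2 * a)) ^ ((a / b) ^ 2)) with hf
  set g : ℝ → ℝ := fun x => arcsin (exp (-(k * x) ^ 2)) with hg
  have hgi : MeasureTheory.IntegrableOn g (Set.Ioi 0) := by
    have := (MeasureTheory.integrableOn_Ioi_comp_mul_left_iff
      (fun x : ℝ => arcsin (exp (-x ^ 2))) 0 hkpos).2
        (by simpa using integrableOn_arcsin_exp_neg_sq)
    exact this
  have hgamma : gammaConst * b ^ 2 = 2 * b / π * ∫ x in Set.Ioi 0, g x := by
    have := MeasureTheory.integral_comp_mul_left_Ioi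
      (fun x : ℝ => arcsin (exp (-x ^ 2))) 0 hkpos
    simp only [mul_zero, smul_eq_mul] at this
    rw [hg, this, gammaConst, hk]
    field_simp
    ring
  have hfc : Continuous f := by
    apply continuous_arcsin.comp
    exact (by fun_prop : Continuous fun x : ℝ => cos (π * x / (2 * a))).rpow_const
      (fun x => Or.inr (by positivity))
  have hgc : Continuous g := by
    rw [hg]; fun_prop
  have hsplit : ∫ x in Set.Ioi 0, g x = (∫ x in (0 : ℝ)..a, g x) + ∫ x in Set.Ioi a, g x := by
    rw [intervalIntegral.integral_of_le ha.le, ← MeasureTheory.setIntegral_union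
      (Set.Ioc_disjoint_Ioi le_rfl) measurableSet_Ioi (hgi.mono_set Set.Ioc_subset_Ioi_self)
      (hgi.mono_set (Set.Ioi_subset_Ioi ha.le)), Set.Ioc_union_Ioi_eq_Ioi ha.le]
  have hmain : |∫ x in (0 : ℝ)..a, (f x - g x)| ≤ 4 / (a / b) ^ 2 * |a - 0| := by
    rw [← Real.norm_eq_abs]
    refine intervalIntegral.norm_integral_le_of_norm_le_const fun x hx => ?_
    rw [Set.uIoc_of_le ha.le] at hx
    have h := abs_arcsin_cos_rpow_sub_le (t := π * x / (2 * a)) (M := (a / b) ^ 2)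
      (by positivity) (by have := hx.1; positivity)
      (by rw [div_le_div_iff₀ (by positivity) (by norm_num)]; nlinarith [hx.2])
    have he : (a / b) ^ 2 * (π * x / (2 * a)) ^ 2 / 2 = (k * x) ^ 2 := by
      rw [hk]
      simp only [div_pow, mul_pow, h2]
      field_simp
    rw [he] at h
    exact h
  have htail := integral_Ioi_arcsin_exp_le ha hkpos
  have htail0 : 0 ≤ ∫ x in Set.Ioi a, g x :=
    MeasureTheory.integral_nonneg fun x => arcsin_nonneg.2 (exp_pos _).le
  rw [intervalIntegral.integral_sub (hfc.intervalIntegrable _ _) (hgc.intervalIntegrable _ _)]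
    at hmain
  have hA : quarterArea a b = 2 * b / π * ∫ x in (0 : ℝ)..a, f x := by
    rw [quarterArea, intervalIntegral.integral_const_mul]
  rw [hA, hgamma, hsplit, ← mul_sub, abs_mul, abs_of_pos (by positivity : 0 < 2 * b / π)]
  have e1 : 4 / (a / b) ^ 2 * |a - 0| = 4 / a * b ^ 2 := by
    rw [sub_zero, abs_of_pos ha]; field_simp
  have e2 : π / 2 / k ^ 2 * (1 / a) = 4 / π / a * b ^ 2 := by
    rw [hk]
    simp only [div_pow, mul_pow, h2]
    field_simp
    norm_num
  rw [e1] at hmain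
  rw [e2] at htail
  have : |(∫ x in (0 : ℝ)..a, f x) - ((∫ x in (0 : ℝ)..a, g x) + ∫ x in Set.Ioi a, g x)|
      ≤ (4 / a + 4 / π / a) * b ^ 2 := by
    have ht : ∫ x in Set.Ioi a, g x ≤ 4 / π / a * b ^ 2 := htail
    rw [abs_le] at hmain ⊢
    constructor <;> nlinarith [hmain.1, hmain.2]
  calc _ ≤ 2 * b / π * ((4 / a + 4 / π / a) * b ^ 2) := by gcongr
    _ = _ := by ring

theorem quarterArea_asymptotics (a : ℝ) (ha : 0 < a) :
    (fun b : ℝ => quarterArea a b - gammaConst * b ^ 2)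
      =O[nhdsWithin 0 (Set.Ioi 0)] fun b : ℝ => b ^ 3 := by
  refine IsBigO.of_bound (2 / π * (4 / a + 4 / π / a)) ?_
  filter_upwards [self_mem_nhdsWithin] with b hb
  have hb : 0 < b := hb
  rw [Real.norm_eq_abs, Real.norm_of_nonneg (by positivity)]
  exact abs_quarterArea_sub_le ha hb
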